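/- Let M ≥ 1 be an integer, η ∈ (0,1), and let r, D be integers with 1 ≤ r ≤ M, D ≥ M+1, and (D+1)·η ≥ M. Define the degree distribution Ψ^r on {1, …, D} by Ψ^r_d = 0 for d ≤ r, Ψ^r_d = r/(d(d−1)) for r+1 ≤ d ≤ D−1, and Ψ^r_D = r/(D−1). Then Ψ^r is a probability distribution on {1, …, D}, and for all nonnegative reals ħ_1, …, ħ_M: Ω(x; ħ, Ψ^r) + (r·∑_{i=r}^{M} ħ_i)·ln(1−x) ≥ 0 for all x ∈ [0, 1−η], and this inequality is strict for all x ∈ (0, 1−η] provided ħ_i > 0 for some 1 ≤ i ≤ M. Consequently, θ = r·∑_{i=r}^{M} ħ_i satisfies the constraint Ω(x; ħ, Ψ^r) + θ·ln(1−x) ≥ 0 for all x ∈ [0, 1−η]. -/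

import Mathlib

/-- The regularized incomplete beta function with positive integer parameters `a`, `b`. -/
noncomputable def incBeta (a b : ℕ) (x : ℝ) : ℝ :=
  ∑ j ∈ Finset.Icc a (a + b - 1),
    (Nat.choose (a + b - 1) j : ℝ) * x ^ j * (1 - x) ^ (a + b - 1 - j)

/-- `S_r(x; Ψ) = ∑_{d=r+1}^D d Ψ_d I_{d-r,r}(x) + ∑_{d=1}^{min(r,D)} d Ψ_d`. -/
noncomputable def Sfun (D r : ℕ) (Ψ : ℕ → ℝ) (x : ℝ) : ℝ :=
  (∑ d ∈ Finset.Icc (r + 1) D, (d : ℝ) * Ψ d * incBeta (d - r) r x) +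
    ∑ d ∈ Finset.Icc 1 (min r D), (d : ℝ) * Ψ d

/-- `Ω(x; ħ, Ψ) = ∑_{r=1}^M ħ_r S_r(x; Ψ)`. -/
noncomputable def OmegaFun (M D : ℕ) (hb Ψ : ℕ → ℝ) (x : ℝ) : ℝ :=
  ∑ r ∈ Finset.Icc 1 M, hb r * Sfun D r Ψ x

/-- The degree distribution `Ψ^r`: `Ψ^r_d = 0` for `d ≤ r`,
`Ψ^r_d = r/(d(d-1))` for `r+1 ≤ d ≤ D-1`, `Ψ^r_D = r/(D-1)`. -/
noncomputable def PsiR (r D : ℕ) : ℕ → ℝ := fun d =>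
  if d ≤ r then 0
  else if d < D then (r : ℝ) / ((d : ℝ) * ((d : ℝ) - 1))
  else if d = D then (r : ℝ) / ((D : ℝ) - 1)
  else 0


/-- Binomial point probability. -/
noncomputable def bb (x : ℝ) (n k : ℕ) : ℝ := (Nat.choose n k : ℝ) * (1 - x) ^ k * x ^ (n - k)

/-- Lower tail: fewer than `i` failures among `n` trials. -/
noncomputable def LL (x : ℝ) (n i : ℕ) : ℝ := ∑ k ∈ Finset.range i, bb x n k

lemma bb_nonneg {x : ℝ} (h0 : 0 ≤ x) (h1 : x < 1) (n k : ℕ) : 0 ≤ bb x n k := by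
  have : 0 ≤ 1 - x := by linarith
  unfold bb; positivity

lemma LL_nonneg {x : ℝ} (h0 : 0 ≤ x) (h1 : x < 1) (n i : ℕ) : 0 ≤ LL x n i :=
  Finset.sum_nonneg fun k _ => bb_nonneg h0 h1 n k

lemma LL_mono {x : ℝ} (h0 : 0 ≤ x) (h1 : x < 1) (n : ℕ) {i j : ℕ} (h : i ≤ j) :
    LL x n i ≤ LL x n j := by
  apply Finset.sum_le_sum_of_subset_of_nonneg
  · intro a; simp only [Finset.mem_range]; omega
  · intro k _ _; exact bb_nonneg h0 h1 n k

lemma LL_pos {x : ℝ} (h0 : 0 < x) (h1 : x < 1) (n : ℕ) {i : ℕ} (hi : 1 ≤ i) : 0 < LL x n i := by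
  have h := LL_mono h0.le h1 n hi
  have : LL x n 1 = x ^ n := by simp [LL, bb]
  rw [this] at h
  exact lt_of_lt_of_le (by positivity) h

lemma bb_rec (x : ℝ) (n k : ℕ) :
    bb x (n + 1) (k + 1) = (1 - x) * bb x n k + x * bb x n (k + 1) := by
  unfold bb
  rw [Nat.choose_succ_succ]
  rcases lt_or_ge k n with h | h
  · obtain ⟨m, rfl⟩ : ∃ m, n = k + 1 + m := ⟨n - (k + 1), by omega⟩
    rw [show k + 1 + m + 1 - (k + 1) = m + 1 by omega, show k + 1 + m - k = m + 1 by omega,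
      show k + 1 + m - (k + 1) = m by omega]
    push_cast; ring
  · rw [Nat.choose_eq_zero_of_lt (show n < k + 1 by omega),
      show n + 1 - (k + 1) = 0 by omega, show n - k = 0 by omega]
    push_cast; ring

lemma LL_step (x : ℝ) (n j : ℕ) :
    LL x n (j + 1) - LL x (n + 1) (j + 1) = (1 - x) * bb x n j := by
  induction j with
  | zero => simp [LL, bb]; ring
  | succ j ih =>
    have e1 : LL x n (j + 1 + 1) = LL x n (j + 1) + bb x n (j + 1) := Finset.sum_range_succ _ _
    have e2 : LL x (n + 1) (j + 1 + 1) = LL x (n + 1) (j + 1) + bb x (n + 1) (j + 1) :=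
      Finset.sum_range_succ _ _
    rw [e1, e2, bb_rec]; linarith

lemma LL_eq_one (x : ℝ) {n i : ℕ} (h : n < i) : LL x n i = 1 := by
  have h1 : LL x n i = LL x n (n + 1) := by
    unfold LL
    symm
    apply Finset.sum_subset
    · intro a; simp only [Finset.mem_range]; omega
    · intro k _ hk
      simp only [Finset.mem_range] at hk
      simp [bb, Nat.choose_eq_zero_of_lt (show n < k by omega)]
  rw [h1]
  have := add_pow (1 - x) x n
  simp only [sub_add_cancel, one_pow] at this
  rw [this]
  unfold LL bb
  apply Finset.sum_congr rfl
  intro k _; ring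

lemma bb_partial (x : ℝ) (m j K : ℕ) :
    ∑ n ∈ Finset.range K, (1 - x) * bb x (n + m) j = LL x m (j + 1) - LL x (K + m) (j + 1) := by
  induction K with
  | zero => simp
  | succ K ih =>
    rw [Finset.sum_range_succ, ih, ← LL_step, show K + 1 + m = K + m + 1 by omega]; ring

lemma LL_partial {x : ℝ} (h0 : 0 ≤ x) (h1 : x < 1) (m i K : ℕ) :
    ∑ n ∈ Finset.range K, LL x (n + m) i ≤ i / (1 - x) * LL x m i := by
  have hp : 0 < 1 - x := by linarith
  have : (1 - x) * ∑ n ∈ Finset.range K, LL x (n + m) i ≤ i * LL x m i := by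
    unfold LL
    rw [Finset.sum_comm, Finset.mul_sum]
    calc _ ≤ ∑ j ∈ Finset.range i, LL x m i := by
          apply Finset.sum_le_sum
          intro j hj
          rw [Finset.mul_sum, bb_partial]
          have := LL_mono h0 h1 m (show j + 1 ≤ i from Finset.mem_range.1 hj)
          have := LL_nonneg h0 h1 (K + m) (j + 1)
          linarith
      _ = _ := by simp [LL]
  rw [div_mul_eq_mul_div, le_div_iff₀ hp]; linarith

lemma LL_summable {x : ℝ} (h0 : 0 ≤ x) (h1 : x < 1) (m i : ℕ) :
    Summable fun n => LL x (n + m) i :=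
  summable_of_sum_range_le (fun n => LL_nonneg h0 h1 _ _) (LL_partial h0 h1 m i)

lemma LL_tsum_le {x : ℝ} (h0 : 0 ≤ x) (h1 : x < 1) (m i : ℕ) :
    ∑' n, LL x (n + m) i ≤ i / (1 - x) * LL x m i :=
  Real.tsum_le_of_sum_range_le (fun n => LL_nonneg h0 h1 _ _) (LL_partial h0 h1 m i)

lemma bb_hasSum {x : ℝ} (h0 : 0 ≤ x) (h1 : x < 1) (j : ℕ) :
    HasSum (fun n => (1 - x) * bb x n j) 1 := by
  have hp : 0 ≤ 1 - x := by linarith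
  rw [hasSum_iff_tendsto_nat_of_nonneg (fun n => mul_nonneg hp (bb_nonneg h0 h1 n j))]
  have e : ∀ K, ∑ n ∈ Finset.range K, (1 - x) * bb x n j = 1 - LL x K (j + 1) := by
    intro K
    have := bb_partial x 0 j K
    rw [LL_eq_one x (show 0 < j + 1 by omega)] at this
    simpa using this
  simp_rw [e]
  have := (LL_summable h0 h1 0 (j + 1)).tendsto_atTop_zero
  simpa using this.const_sub 1

lemma bb_absorb (x : ℝ) (n j : ℕ) :
    bb x (n + 1) (j + 1) / ((n + 1 : ℕ) : ℝ) = 1 / ((j + 1 : ℕ) : ℝ) * ((1 - x) * bb x n j) := by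
  have h := Nat.add_one_mul_choose_eq n j
  have h' : ((n : ℝ) + 1) * (n.choose j : ℝ) = ((n + 1).choose (j + 1) : ℝ) * ((j : ℝ) + 1) := by
    exact_mod_cast h
  unfold bb
  rw [show n + 1 - (j + 1) = n - j by omega]
  have a : (n : ℝ) + 1 ≠ 0 := by positivity
  have b : (j : ℝ) + 1 ≠ 0 := by positivity
  push_cast
  field_simp
  linear_combination (-(1 - x) ^ (j + 1)) * x ^ (n - j) * h'

lemma LL_hasSum {x : ℝ} (h0 : 0 ≤ x) (h1 : x < 1) (j : ℕ) :
    HasSum (fun n : ℕ => LL x n (j + 1) / (n : ℝ))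
      (∑ n ∈ Finset.range (j + 1), 1 / (n : ℝ) - Real.log (1 - x)) := by
  induction j with
  | zero =>
    rw [← hasSum_nat_add_iff' 1]
    have := Real.hasSum_pow_div_log_of_abs_lt_one (x := x) (by rw [abs_lt]; constructor <;> linarith)
    simpa [LL, bb] using this
  | succ j ih =>
    have h2 : HasSum (fun n : ℕ => bb x n (j + 1) / (n : ℝ)) (1 / ((j + 1 : ℕ) : ℝ)) := by
      rw [← hasSum_nat_add_iff' 1]
      simp_rw [bb_absorb]
      simpa using (bb_hasSum h0 h1 j).mul_left (1 / ((j + 1 : ℕ) : ℝ))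
    convert ih.add h2 using 1
    · funext n
      rw [← add_div]; congr 1; exact Finset.sum_range_succ _ _
    · rw [Finset.sum_range_succ _ (j + 1)]; ring

/-- The key logarithm bound, `D = E + 1`. -/
lemma key_bound {x : ℝ} (h0 : 0 < x) (h1 : x < 1) (E i : ℕ) (hi : 1 ≤ i)
    (hE : (i : ℝ) ≤ ((E : ℝ) + 2) * (1 - x)) :
    ∑ n ∈ Finset.range i, 1 / (n : ℝ) - Real.log (1 - x) <
      ∑ n ∈ Finset.range (E + 1), LL x n i / (n : ℝ) + LL x E i := by
  have hp : 0 < 1 - x := by linarith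
  obtain ⟨j, rfl⟩ : ∃ j, i = j + 1 := ⟨i - 1, by omega⟩
  have hs := LL_hasSum h0.le h1 j
  rw [← hs.tsum_eq, ← hs.summable.sum_add_tsum_nat_add (E + 1)]
  have hsum2 : Summable fun n => LL x (n + (E + 1)) (j + 1) := LL_summable h0.le h1 _ _
  have hE1 : (0 : ℝ) < (E : ℝ) + 1 := by positivity
  have hlt : ∑' n : ℕ, LL x (n + (E + 1)) (j + 1) / ((n + (E + 1) : ℕ) : ℝ) <
      ∑' n : ℕ, LL x (n + (E + 1)) (j + 1) / ((E : ℝ) + 1) := by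
    apply Summable.tsum_lt_tsum (i := 1)
    · intro n
      apply div_le_div_of_nonneg_left (LL_nonneg h0.le h1 _ _) hE1
      push_cast
      have : (0 : ℝ) ≤ n := by positivity
      linarith
    · apply div_lt_div_of_pos_left (LL_pos h0 h1 _ hi) hE1
      push_cast; linarith
    · exact (summable_nat_add_iff (E + 1)).2 hs.summable
    · exact hsum2.div_const _
  have hle : ∑' n : ℕ, LL x (n + (E + 1)) (j + 1) / ((E : ℝ) + 1) ≤ LL x E (j + 1) := by
    rw [tsum_div_const, div_le_iff₀ hE1]
    have a := LL_tsum_le h0.le h1 E (j + 1)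
    have b := (LL_summable h0.le h1 E (j + 1)).tsum_eq_zero_add
    have c : ((j + 1 : ℕ) : ℝ) / (1 - x) ≤ (E : ℝ) + 2 := by rwa [div_le_iff₀ hp]
    have d := mul_le_mul_of_nonneg_right c (LL_nonneg h0.le h1 E (j + 1))
    have e : ∑' n : ℕ, LL x (n + (E + 1)) (j + 1) = ∑' n : ℕ, LL x (n + 1 + E) (j + 1) := by
      congr 1; funext n; congr 1; omega
    rw [zero_add] at b
    rw [e]
    linarith
  linarith

lemma incBeta_eq (x : ℝ) {n i : ℕ} (h : i ≤ n) (hi : 1 ≤ i) :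
    incBeta (n + 1 - i) i x = LL x n i := by
  unfold incBeta LL bb
  rw [show n + 1 - i + i - 1 = n by omega]
  apply Finset.sum_bij' (fun j _ => n - j) (fun k _ => n - k)
  · intro a; simp only [Finset.mem_Icc, Finset.mem_range]; omega
  · intro a; simp only [Finset.mem_Icc, Finset.mem_range]; omega
  · intro a; simp only [Finset.mem_Icc]; omega
  · intro a; simp only [Finset.mem_range]; omega
  · intro a ha
    simp only [Finset.mem_Icc] at ha
    rw [Nat.choose_symm ha.2, show n - (n - a) = a by omega]; ring

lemma sum_Icc_one (f : ℕ → ℝ) (D : ℕ) :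
    ∑ d ∈ Finset.Icc 1 D, f d = ∑ n ∈ Finset.range D, f (n + 1) := by
  rw [Finset.range_eq_Ico, Finset.sum_Ico_add' f 0 D 1]
  rfl

lemma Sfun_eq (x : ℝ) {D i : ℕ} (hi : 1 ≤ i) (hD : i ≤ D) (Ψ : ℕ → ℝ) :
    Sfun D i Ψ x = ∑ n ∈ Finset.range D, ((n : ℝ) + 1) * Ψ (n + 1) * LL x n i := by
  have e := sum_Icc_one (fun d => (d : ℝ) * Ψ d * LL x (d - 1) i) D
  simp only [Nat.add_sub_cancel, Nat.cast_add, Nat.cast_one] at e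
  rw [← e]
  have hu : Finset.Icc 1 D = Finset.Icc (i + 1) D ∪ Finset.Icc 1 i := by
    ext a; simp only [Finset.mem_union, Finset.mem_Icc]; omega
  have hd : Disjoint (Finset.Icc (i + 1) D) (Finset.Icc 1 i) := by
    rw [Finset.disjoint_left]; intro a; simp only [Finset.mem_Icc]; omega
  unfold Sfun
  rw [hu, Finset.sum_union hd, min_eq_left hD]
  congr 1
  · apply Finset.sum_congr rfl
    intro d h
    simp only [Finset.mem_Icc] at h
    rw [← incBeta_eq x (n := d - 1) (by omega) hi, show d - 1 + 1 - i = d - i by omega]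
  · apply Finset.sum_congr rfl
    intro d h
    simp only [Finset.mem_Icc] at h
    rw [LL_eq_one x (show d - 1 < i by omega), mul_one]

lemma PsiR_low {r D n : ℕ} (h : n < r) : PsiR r D (n + 1) = 0 := by
  unfold PsiR; rw [if_pos (by omega)]

lemma PsiR_mid {r E n : ℕ} (h : r ≤ n) (hn : n < E) :
    PsiR r (E + 1) (n + 1) = (r : ℝ) / (((n : ℝ) + 1) * n) := by
  unfold PsiR; rw [if_neg (by omega), if_pos (by omega)]; push_cast; simp

lemma PsiR_top {r E : ℕ} (h : r ≤ E) :
    PsiR r (E + 1) (E + 1) = (r : ℝ) / E := by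
  unfold PsiR; rw [if_neg (by omega), if_neg (by omega), if_pos rfl]; push_cast; simp

lemma PsiR_nonneg {r E n : ℕ} (h : r ≤ E) (hn : n ≤ E) : 0 ≤ PsiR r (E + 1) (n + 1) := by
  rcases lt_or_ge n r with h1 | h1
  · rw [PsiR_low h1]
  rcases lt_or_ge n E with h2 | h2
  · rw [PsiR_mid h1 h2]; positivity
  · obtain rfl : n = E := by omega
    rw [PsiR_top h]; positivity

lemma PsiR_sum {r E : ℕ} (hr : 1 ≤ r) (h : r ≤ E) :
    ∑ d ∈ Finset.Icc 1 (E + 1), PsiR r (E + 1) d = 1 := by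
  rw [sum_Icc_one, Finset.sum_range_succ, PsiR_top h]
  have key : ∀ K, r ≤ K → K ≤ E →
      ∑ n ∈ Finset.range K, PsiR r (E + 1) (n + 1) = 1 - (r : ℝ) / K := by
    intro K hK
    induction K, hK using Nat.le_induction with
    | base =>
      intro _
      rw [Finset.sum_eq_zero fun n hn => PsiR_low (Finset.mem_range.1 hn), div_self, sub_self]
      positivity
    | succ K hK ih =>
      intro hKE
      rw [Finset.sum_range_succ, ih (by omega), PsiR_mid hK (by omega)]
      have : (0 : ℝ) < K := by exact_mod_cast (by omega : 0 < K)
      push_cast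
      field_simp
      ring
  rw [key E h le_rfl]; ring

lemma Sfun_nonneg {x : ℝ} (h0 : 0 ≤ x) (h1 : x < 1) {r E i : ℕ} (hi : 1 ≤ i) (hiE : i ≤ E)
    (h : r ≤ E) : 0 ≤ Sfun (E + 1) i (PsiR r (E + 1)) x := by
  rw [Sfun_eq x hi (by omega)]
  apply Finset.sum_nonneg
  intro n hn
  have := PsiR_nonneg h (show n ≤ E by have := Finset.mem_range.1 hn; omega)
  have := LL_nonneg h0 h1 n i
  positivity

lemma Sfun_pos {x : ℝ} (h0 : 0 < x) (h1 : x < 1) {r E i : ℕ} (hi : 1 ≤ i) (hiE : i ≤ E)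
    (hr : 1 ≤ r) (h : r ≤ E) : 0 < Sfun (E + 1) i (PsiR r (E + 1)) x := by
  rw [Sfun_eq x hi (by omega)]
  apply Finset.sum_pos'
  · intro n hn
    have := PsiR_nonneg h (show n ≤ E by have := Finset.mem_range.1 hn; omega)
    have := LL_nonneg h0.le h1 n i
    positivity
  · refine ⟨E, by simp, ?_⟩
    rw [PsiR_top h]
    have := LL_pos h0 h1 E hi
    have : 0 < E := by omega
    positivity

lemma Sfun_log {x : ℝ} (h0 : 0 < x) (h1 : x < 1) {r E i : ℕ} (hr : 1 ≤ r) (hri : r ≤ i)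
    (hiE : i ≤ E) (hE : (i : ℝ) ≤ ((E : ℝ) + 2) * (1 - x)) :
    0 < Sfun (E + 1) i (PsiR r (E + 1)) x + r * Real.log (1 - x) := by
  have hi : 1 ≤ i := by omega
  rw [Sfun_eq x hi (by omega), Finset.sum_range_succ, PsiR_top (by omega)]
  have k := key_bound h0 h1 E i hi hE
  rw [Finset.sum_range_succ] at k
  have hE0 : (0 : ℝ) < E := by exact_mod_cast (by omega : 0 < E)
  have hr0 : (0 : ℝ) < r := by exact_mod_cast hr
  have e : ∑ n ∈ Finset.range i, 1 / (n : ℝ) =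
      ∑ n ∈ Finset.range E, if n < i then 1 / (n : ℝ) else 0 := by
    rw [← Finset.sum_filter]
    congr 1
    ext a; simp only [Finset.mem_filter, Finset.mem_range]; omega
  have c : (r : ℝ) * (∑ n ∈ Finset.range E, LL x n i / (n : ℝ) - ∑ n ∈ Finset.range i, 1 / (n : ℝ))
      ≤ ∑ n ∈ Finset.range E, ((n : ℝ) + 1) * PsiR r (E + 1) (n + 1) * LL x n i := by
    rw [e, ← Finset.sum_sub_distrib, Finset.mul_sum]
    apply Finset.sum_le_sum
    intro n hn
    have hn := Finset.mem_range.1 hn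
    rcases lt_or_ge n r with h | h
    · rw [PsiR_low h, LL_eq_one x (show n < i by omega), if_pos (by omega)]; simp
    · rw [PsiR_mid h hn]
      have hn0 : (0 : ℝ) < n := by exact_mod_cast (by omega : 0 < n)
      have e2 : ((n : ℝ) + 1) * (r / (((n : ℝ) + 1) * n)) * LL x n i = r * (LL x n i / n) := by
        field_simp
      rw [e2]
      apply mul_le_mul_of_nonneg_left _ hr0.le
      have : 0 ≤ if n < i then 1 / (n : ℝ) else 0 := by split_ifs <;> positivity
      linarith
  have t : ((E : ℝ) + 1) * (r / E) * LL x E i = r * (LL x E i / E + LL x E i) := by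
    field_simp
    ring
  rw [t]
  have k2 := mul_lt_mul_of_pos_left k hr0
  rw [mul_sub, mul_add, mul_add] at k2
  rw [mul_sub] at c
  rw [mul_add]
  linarith

theorem PsiR_achieves_rate (M : ℕ) (hM : 1 ≤ M) (η : ℝ) (hη0 : 0 < η) (hη1 : η < 1)
    (r D : ℕ) (hr1 : 1 ≤ r) (hrM : r ≤ M) (hD : M + 1 ≤ D)
    (hDη : (M : ℝ) ≤ ((D : ℝ) + 1) * η) :
    (∀ d ∈ Finset.Icc 1 D, 0 ≤ PsiR r D d) ∧
    (∑ d ∈ Finset.Icc 1 D, PsiR r D d = 1) ∧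
    (∀ hb : ℕ → ℝ, (∀ i ∈ Finset.Icc 1 M, 0 ≤ hb i) →
      (∀ x ∈ Set.Icc (0:ℝ) (1 - η),
        OmegaFun M D hb (PsiR r D) x +
          ((r : ℝ) * ∑ i ∈ Finset.Icc r M, hb i) * Real.log (1 - x) ≥ 0) ∧
      ((∃ i ∈ Finset.Icc 1 M, 0 < hb i) →
        ∀ x : ℝ, 0 < x → x ≤ 1 - η →
          OmegaFun M D hb (PsiR r D) x +
            ((r : ℝ) * ∑ i ∈ Finset.Icc r M, hb i) * Real.log (1 - x) > 0)) := by
  obtain ⟨E, rfl⟩ : ∃ E, D = E + 1 := ⟨D - 1, by omega⟩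
  have hrE : r ≤ E := by omega
  refine ⟨?_, PsiR_sum hr1 hrE, ?_⟩
  · intro d hd
    simp only [Finset.mem_Icc] at hd
    obtain ⟨n, rfl⟩ : ∃ n, d = n + 1 := ⟨d - 1, by omega⟩
    exact PsiR_nonneg hrE (by omega)
  intro hb hhb
  have eq : ∀ x : ℝ, OmegaFun M (E + 1) hb (PsiR r (E + 1)) x +
      ((r : ℝ) * ∑ i ∈ Finset.Icc r M, hb i) * Real.log (1 - x) =
      ∑ i ∈ Finset.Icc 1 M, hb i * (Sfun (E + 1) i (PsiR r (E + 1)) x +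
        if r ≤ i then r * Real.log (1 - x) else 0) := by
    intro x
    have h : ∑ i ∈ Finset.Icc r M, hb i = ∑ i ∈ Finset.Icc 1 M, if r ≤ i then hb i else 0 := by
      rw [← Finset.sum_filter]
      congr 1
      ext a; simp only [Finset.mem_filter, Finset.mem_Icc]; omega
    unfold OmegaFun
    rw [h, Finset.mul_sum, Finset.sum_mul, ← Finset.sum_add_distrib]
    apply Finset.sum_congr rfl
    intro i _
    split_ifs <;> ring
  have pos : ∀ x : ℝ, 0 < x → x ≤ 1 - η → ∀ i ∈ Finset.Icc 1 M,
      0 < Sfun (E + 1) i (PsiR r (E + 1)) x + if r ≤ i then r * Real.log (1 - x) else 0 := by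
    intro x hx0 hx1 i hi
    simp only [Finset.mem_Icc] at hi
    split_ifs with h
    · apply Sfun_log hx0 (by linarith) hr1 h (by omega)
      have a : (i : ℝ) ≤ M := by exact_mod_cast hi.2
      have b : ((E : ℝ) + 2) * η ≤ ((E : ℝ) + 2) * (1 - x) :=
        mul_le_mul_of_nonneg_left (by linarith) (by positivity)
      push_cast at hDη
      linarith
    · rw [add_zero]
      exact Sfun_pos hx0 (by linarith) hi.1 (by omega) hr1 hrE
  constructor
  · rintro x ⟨hx0, hx1⟩
    rw [eq]
    apply Finset.sum_nonneg
    intro i hi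
    apply mul_nonneg (hhb i hi)
    rcases hx0.eq_or_lt with rfl | hx
    · have hi' := Finset.mem_Icc.1 hi
      have := Sfun_nonneg (x := 0) le_rfl one_pos (r := r) (E := E) hi'.1 (by omega) hrE
      simpa using this
    · exact (pos x hx hx1 i hi).le
  · rintro ⟨i, hi, hbi⟩ x hx0 hx1
    rw [eq]
    apply Finset.sum_pos'
    · intro k hk
      exact mul_nonneg (hhb k hk) (pos x hx0 hx1 k hk).le
    · exact ⟨i, hi, mul_pos hbi (pos x hx0 hx1 i hi)⟩
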